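/- arXiv:2306.09157 — 2 statements merged into one kernel-verified Lean document; each statement's English description precedes it below -/
import Mathlib

section
/- Let β = 10^{−28}, and let G be a connected 100-almost-regular bipartite graph on n vertices with mixing time k and δ(G) ≥ 10^3·k^2/β. Then for every vertex v of G, the probability that a nearest-neighbour random walk starting at v of length β^2·n/(10^6·k) is self-avoiding (i.e. visits pairwise distinct vertices) is at least e^{−β^3·n/(10^5·k^2)}. -/
/-! Let `M` be the transition matrix, `S` the set of vertices visited so far and `u` the current
vertex. The proof compares the survival probability with the potential
`Φ(S, u) = ∑_{i=1}^{k} (1 + i/k) · ℙ_u(X_i ∈ S)` (`visitPotential`), and shows by induction on the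
number `t` of remaining steps that the walk makes `t` further self-avoiding steps off `S` with
probability at least `(1 - s)^t (1 - Φ(S, u))`, where `s` is of order `β / k`
(`survival_lower_bound`).

For the inductive step, condition on the first step `w`. The event `w ∈ S` and the average of
`Φ(S, w)` together cost `∑_{i=0}^{k} (1 + i/k) · ℙ_u(X_{i+1} ∈ S)`. As the weights increase with `i`,
this is at most `(1 - 1/(2k)) Φ(S, u) + 2 ℙ_u(X_{k+1} ∈ S)` (`weighted_shift_le`). By mixing and
almost-regularity, `ℙ_u(X_{k+1} ∈ S) ≤ 201 |S| / n` (`transMat_pow_mix_le`). Adding `w` to `S`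
increases the potential at `w` by at most `2k/δ`, since every entry of a positive power of `M` is at
most `1/δ` (`transMat_pow_succ_le`). Both errors are `O(β / k)`, hence at most `s`, and the
contraction factor `1 - 1/(2k)` absorbs the cross term `s Φ(S, u)`. The walk starts from `S = {v}`,
where `Φ ≤ 2k/δ ≤ s`, so its survival probability is at least `(1 - s)^(T + 1)`.
-/

open Finset
open scoped Classical

/-- The average degree of a graph. -/
noncomputable def avgDeg {V : Type} [Fintype V] (G : SimpleGraph V) : ℝ :=
  (∑ v : V, (G.degree v : ℝ)) / (Fintype.card V : ℝ)

/-- A graph is `K`-almost-regular if its maximum degree is at most `K` times its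
minimum degree. -/
noncomputable def AlmostRegular {V : Type} [Fintype V] (K : ℝ) (G : SimpleGraph V) : Prop :=
  (G.maxDegree : ℝ) ≤ K * (G.minDegree : ℝ)

/-- The number of edges of `G` with one endpoint in `X` and the other outside of `X`. -/
noncomputable def crossCount {V : Type} [Fintype V] (G : SimpleGraph V) (X : Finset V) : ℕ :=
  (G.edgeFinset.filter (fun e => ∃ a ∈ X, ∃ b ∈ Xᶜ, e = s(a, b))).card

/-- `G` is a `lam`-expander: every vertex set `X` with `|X| ≤ n/2` satisfies
`e(X, X̄) ≥ lam · d(G) · |X|`. -/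
noncomputable def IsExpander {V : Type} [Fintype V] (lam : ℝ) (G : SimpleGraph V) : Prop :=
  ∀ X : Finset V, (X.card : ℝ) ≤ (Fintype.card V : ℝ) / 2 →
    (crossCount G X : ℝ) ≥ lam * avgDeg G * (X.card : ℝ)

/-- The transition matrix `M = D·A` of the nearest-neighbour random walk on `G`:
`M v u = 1/d(v)` if `vu` is an edge and `0` otherwise. -/
noncomputable def transMat {V : Type} [Fintype V] (G : SimpleGraph V) : Matrix V V ℝ :=
  fun v u => if G.Adj v u then (1 : ℝ) / (G.degree v : ℝ) else 0

/-- `{P, Pᶜ}` is a bipartition of `G`: every edge crosses between `P` and its complement. -/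
def IsBipartition {V : Type} (G : SimpleGraph V) (P : Finset V) : Prop :=
  ∀ a b, G.Adj a b → (a ∈ P ↔ b ∉ P)

/-- A bipartite graph `G` with bipartition `{P, Pᶜ}` has mixing time `k` if for all vertices
`u, v`, `|(M^k)_{v,u} − (d(u)/(2m))·(1 + (−1)^{k + 1_{v∈P} + 1_{u∈P}})| ≤ 1/n²`. -/
noncomputable def HasMixingTime {V : Type} [Fintype V] (G : SimpleGraph V) (P : Finset V)
    (k : ℕ) : Prop :=
  ∀ v u : V,
    |((transMat G ^ k) v u) - ((G.degree u : ℝ) / (2 * (G.edgeFinset.card : ℝ))) *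
      (1 + (-1 : ℝ) ^ (k + (if v ∈ P then 1 else 0) + (if u ∈ P then 1 else 0)))| ≤
      1 / (Fintype.card V : ℝ) ^ 2

/-- The probability of a given trajectory `f` of `t` steps of the nearest-neighbour random
walk: the product of `1/d(v_i)` over `0 ≤ i ≤ t−1`. -/
noncomputable def walkProb {V : Type} [Fintype V] (G : SimpleGraph V) (t : ℕ)
    (f : Fin (t + 1) → V) : ℝ :=
  ∏ i : Fin t, (1 : ℝ) / (G.degree (f i.castSucc) : ℝ)

/-- `f : Fin (t+1) → V` is a walk in `G`: consecutive vertices are adjacent. -/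
def IsWalkFun {V : Type} (G : SimpleGraph V) (t : ℕ) (f : Fin (t + 1) → V) : Prop :=
  ∀ i : Fin t, G.Adj (f i.castSucc) (f i.succ)

/-- The probability that the nearest-neighbour random walk of length `t` started at `v`
satisfies the event `E`. -/
noncomputable def walkEventProb {V : Type} [Fintype V] (G : SimpleGraph V) (v : V) (t : ℕ)
    (E : (Fin (t + 1) → V) → Prop) : ℝ :=
  ∑ f : Fin (t + 1) → V, if f 0 = v ∧ IsWalkFun G t f ∧ E f then walkProb G t f else 0

/-! ### Powers of the transition matrix -/

section Aux

variable {V : Type} [Fintype V] (G : SimpleGraph V)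

lemma transMat_nonneg (v u : V) : 0 ≤ transMat G v u := by
  unfold transMat; split_ifs <;> simp

lemma transMat_pow_nonneg (i : ℕ) (v u : V) : 0 ≤ (transMat G ^ i) v u := by
  induction i generalizing u with
  | zero => rw [pow_zero, Matrix.one_apply]; split_ifs <;> norm_num
  | succ i ih =>
    rw [pow_succ, Matrix.mul_apply]
    exact Finset.sum_nonneg fun w _ => mul_nonneg (ih w) (transMat_nonneg G w u)

lemma transMat_row_sum (hd : 0 < G.minDegree) (v : V) : ∑ u, transMat G v u = 1 := by
  have h : 0 < G.degree v := hd.trans_le (G.minDegree_le_degree v)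
  have h' : (G.degree v : ℝ) ≠ 0 := by positivity
  unfold transMat
  rw [← Finset.sum_filter, Finset.sum_const, ← G.neighborFinset_eq_filter,
    G.card_neighborFinset_eq_degree, nsmul_eq_mul]
  field_simp

lemma transMat_pow_row_sum (hd : 0 < G.minDegree) (i : ℕ) (v : V) :
    ∑ u, (transMat G ^ i) v u = 1 := by
  induction i with
  | zero => simp [Matrix.one_apply]
  | succ i ih =>
    simp_rw [pow_succ, Matrix.mul_apply]
    rw [Finset.sum_comm]
    simp_rw [← Finset.mul_sum, transMat_row_sum G hd, mul_one]
    exact ih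

lemma transMat_le (hd : 0 < G.minDegree) (v u : V) :
    transMat G v u ≤ 1 / (G.minDegree : ℝ) := by
  unfold transMat
  split_ifs
  · have : (0 : ℝ) < G.minDegree := by exact_mod_cast hd
    have h2 : (G.minDegree : ℝ) ≤ G.degree v := by exact_mod_cast G.minDegree_le_degree v
    gcongr
  · positivity

/-- At any positive time, whatever the penultimate vertex, a given vertex is occupied with
probability at most `1/δ`. -/
lemma transMat_pow_succ_le (hd : 0 < G.minDegree) (i : ℕ) (v u : V) :
    (transMat G ^ (i + 1)) v u ≤ 1 / (G.minDegree : ℝ) := by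
  rw [pow_succ, Matrix.mul_apply]
  calc ∑ w, (transMat G ^ i) v w * transMat G w u
      ≤ ∑ w, (transMat G ^ i) v w * (1 / (G.minDegree : ℝ)) := by
        gcongr with w
        · exact transMat_pow_nonneg G i v w
        · exact transMat_le G hd w u
    _ = _ := by rw [← Finset.sum_mul, transMat_pow_row_sum G hd, one_mul]

/-- After `k + 1` steps no vertex is more than a constant factor likelier than under the uniform
distribution: `d(u)/m ≤ 2Δ/(nδ) ≤ 200/n`, up to the mixing error `1/n² ≤ 1/n`. -/
lemma transMat_pow_mix_le {P : Finset V} {k : ℕ} (hd : 0 < G.minDegree)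
    (hreg : AlmostRegular 100 G) (hmix : HasMixingTime G P k) (v u : V) :
    (transMat G ^ (k + 1)) v u ≤ 201 / (Fintype.card V : ℝ) := by
  have hV : Nonempty V := ⟨v⟩
  have hn : (1 : ℝ) ≤ Fintype.card V := by exact_mod_cast Fintype.card_pos
  have hd' : (0 : ℝ) < G.minDegree := by exact_mod_cast hd
  have hm : (Fintype.card V : ℝ) * G.minDegree ≤ 2 * (G.edgeFinset.card : ℝ) := by
    have h := G.sum_degrees_eq_twice_card_edges
    have h2 : Fintype.card V * G.minDegree ≤ ∑ w, G.degree w := by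
      rw [← smul_eq_mul, Fintype.card]
      exact Finset.card_nsmul_le_sum _ _ _ fun w _ => G.minDegree_le_degree w
    rw [h] at h2
    exact_mod_cast h2
  have key : ∀ w, (transMat G ^ k) w u ≤ 201 / (Fintype.card V : ℝ) := by
    intro w
    have h1 := (abs_le.mp (hmix w u)).2
    have hpow : (-1 : ℝ) ^ (k + (if w ∈ P then 1 else 0) + (if u ∈ P then 1 else 0)) ≤ 1 := by
      rcases neg_one_pow_eq_or ℝ (k + (if w ∈ P then 1 else 0) + (if u ∈ P then 1 else 0)) with
        h | h <;> rw [h] <;> norm_num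
    have hdeg : (G.degree u : ℝ) ≤ 100 * G.minDegree :=
      le_trans (by exact_mod_cast G.degree_le_maxDegree u) hreg
    have h2 : (G.degree u : ℝ) / (2 * (G.edgeFinset.card : ℝ)) ≤ 100 / Fintype.card V := by
      calc _ ≤ (100 * G.minDegree : ℝ) / (Fintype.card V * G.minDegree) := by gcongr
        _ = _ := by field_simp
    have h0 : 0 ≤ (G.degree u : ℝ) / (2 * (G.edgeFinset.card : ℝ)) := by positivity
    have h3 : (1 : ℝ) / (Fintype.card V : ℝ) ^ 2 ≤ 1 / Fintype.card V := by
      gcongr; nlinarith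
    have h4 := mul_le_mul_of_nonneg_left
      (show 1 + (-1 : ℝ) ^ (k + (if w ∈ P then 1 else 0) + (if u ∈ P then 1 else 0)) ≤ 2 by
        linarith) h0
    have h5 : (201 : ℝ) / Fintype.card V = 2 * (100 / Fintype.card V) + 1 / Fintype.card V := by
      ring
    linarith
  rw [pow_succ', Matrix.mul_apply]
  calc ∑ w, transMat G v w * (transMat G ^ k) w u
      ≤ ∑ w, transMat G v w * (201 / (Fintype.card V : ℝ)) := by
        gcongr with w
        · exact transMat_nonneg G v w
        · exact key w
    _ = _ := by rw [← Finset.sum_mul, transMat_row_sum G hd, one_mul]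

/-! ### The potential -/

/-- `∑_{i=1}^{k} (1 + i/k) · ℙ_u(X_i ∈ S)`: a weighted expected number of visits to `S` during the
next `k` steps of the walk from `u`. The sum is indexed by `i - 1`. -/
noncomputable def visitPotential (k : ℕ) (S : Finset V) (u : V) : ℝ :=
  ∑ i ∈ range k, (1 + ((i + 1 : ℕ) : ℝ) / k) * ∑ x ∈ S, (transMat G ^ (i + 1)) u x

lemma visitPotential_nonneg (k : ℕ) (S : Finset V) (u : V) : 0 ≤ visitPotential G k S u := by
  unfold visitPotential
  exact Finset.sum_nonneg fun i _ => mul_nonneg (by positivity)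
    (Finset.sum_nonneg fun x _ => transMat_pow_nonneg G _ u x)

lemma visitPotential_singleton_le (hd : 0 < G.minDegree) (k : ℕ) (w : V) :
    visitPotential G k {w} w ≤ 2 * k / G.minDegree := by
  have h : ∀ i ∈ range k, (1 + ((i + 1 : ℕ) : ℝ) / k) * ∑ x ∈ {w}, (transMat G ^ (i + 1)) w x
      ≤ 2 * (1 / G.minDegree) := by
    intro i hi
    have hi' : i + 1 ≤ k := Finset.mem_range.mp hi
    have hk : ((i + 1 : ℕ) : ℝ) / k ≤ 1 :=
      div_le_one_of_le₀ (by exact_mod_cast hi') (by positivity)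
    rw [Finset.sum_singleton]
    exact mul_le_mul (by linarith) (transMat_pow_succ_le G hd i w w)
      (transMat_pow_nonneg G _ _ _) (by norm_num)
  calc visitPotential G k {w} w ≤ ∑ i ∈ range k, 2 * (1 / (G.minDegree : ℝ)) :=
        Finset.sum_le_sum h
    _ = _ := by rw [Finset.sum_const, Finset.card_range, nsmul_eq_mul]; ring

lemma visitPotential_insert_le (hd : 0 < G.minDegree) (k : ℕ) {S : Finset V} {w : V}
    (hw : w ∉ S) :
    visitPotential G k (insert w S) w ≤ visitPotential G k S w + 2 * k / G.minDegree := by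
  have h : visitPotential G k (insert w S) w
      = visitPotential G k {w} w + visitPotential G k S w := by
    unfold visitPotential
    simp_rw [Finset.sum_insert hw, Finset.sum_singleton, mul_add, Finset.sum_add_distrib]
  rw [h]
  linarith [visitPotential_singleton_le G hd k w]

/-- Averaging the potential over the first step shifts every time by one. -/
lemma sum_transMat_mul_visitPotential (k : ℕ) (S : Finset V) (u : V) :
    ∑ w, transMat G u w * visitPotential G k S w
      = ∑ i ∈ range k, (1 + ((i + 1 : ℕ) : ℝ) / k) * ∑ x ∈ S, (transMat G ^ (i + 2)) u x := by
  unfold visitPotential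
  simp_rw [Finset.mul_sum]
  rw [Finset.sum_comm]
  refine Finset.sum_congr rfl fun i _ => ?_
  rw [Finset.sum_comm]
  refine Finset.sum_congr rfl fun x _ => ?_
  rw [pow_succ' _ (i + 1), Matrix.mul_apply, Finset.mul_sum]
  exact Finset.sum_congr rfl fun w _ => by ring

/-- The weights `1 + i/k` grow by a factor of at least `1/(1 - 1/(2k))` at each index, so shifting
the times by one makes the weighted sum contract, up to the single new term `2 a (k + 1)`. -/
lemma weighted_shift_le {k : ℕ} (hk : 0 < k) (a : ℕ → ℝ) (ha : ∀ i, 0 ≤ a i) :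
    a 1 + ∑ i ∈ range k, (1 + ((i + 1 : ℕ) : ℝ) / k) * a (i + 2)
      ≤ (1 - 1 / (2 * k)) * ∑ i ∈ range k, (1 + ((i + 1 : ℕ) : ℝ) / k) * a (i + 1)
        + 2 * a (k + 1) := by
  have hk' : (0 : ℝ) < k := by exact_mod_cast hk
  have h1 : a 1 + ∑ i ∈ range k, (1 + ((i + 1 : ℕ) : ℝ) / k) * a (i + 2)
      = ∑ i ∈ range k, (1 + (i : ℝ) / k) * a (i + 1) + 2 * a (k + 1) := by
    have h2 : ∑ i ∈ range (k + 1), (1 + (i : ℝ) / k) * a (i + 1)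
        = ∑ i ∈ range k, (1 + ((i + 1 : ℕ) : ℝ) / k) * a (i + 2) + a 1 := by
      rw [Finset.sum_range_succ']; simp
    have h3 : ∑ i ∈ range (k + 1), (1 + (i : ℝ) / k) * a (i + 1)
        = ∑ i ∈ range k, (1 + (i : ℝ) / k) * a (i + 1) + 2 * a (k + 1) := by
      rw [Finset.sum_range_succ, div_self hk'.ne']; norm_num
    linarith
  rw [h1, Finset.mul_sum]
  gcongr ?_ + _
  refine Finset.sum_le_sum fun i hi => ?_
  have hi' : ((i : ℝ) + 1) ≤ k := by exact_mod_cast Finset.mem_range.mp hi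
  rw [← mul_assoc]
  refine mul_le_mul_of_nonneg_right ?_ (ha _)
  have h5 : (1 - 1 / (2 * (k : ℝ))) * (1 + ((i + 1 : ℕ) : ℝ) / k) - (1 + (i : ℝ) / k)
      = (k - (i + 1)) / (2 * k ^ 2) := by
    push_cast; field_simp; ring
  have h6 : 0 ≤ ((k : ℝ) - (i + 1)) / (2 * k ^ 2) := div_nonneg (by linarith) (by positivity)
  linarith

/-! ### First-step decomposition of the walk -/

/-- A self-avoiding trajectory which, after its starting point, avoids `S`. -/
def AvoidEvent (S : Finset V) (t : ℕ) (f : Fin (t + 1) → V) : Prop :=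
  Function.Injective f ∧ ∀ i : Fin t, f i.succ ∉ S

lemma walkEventProb_zero (v : V) (E : (Fin 1 → V) → Prop) (hE : ∀ f, E f) :
    walkEventProb G v 0 E = 1 := by
  have h1 : ∀ f : Fin 1 → V, (f 0 = v ∧ IsWalkFun G 0 f ∧ E f) ↔ f = fun _ => v := by
    intro f
    constructor
    · rintro ⟨h, -, -⟩
      funext i
      rw [Subsingleton.elim i 0, h]
    · rintro rfl
      exact ⟨rfl, fun i => i.elim0, hE _⟩
  simp [walkEventProb, h1, walkProb]

lemma avoidEvent_cons {S : Finset V} {v : V} (hv : v ∈ S) (t : ℕ) (g : Fin (t + 1) → V) :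
    AvoidEvent S (t + 1) (Fin.cons v g : Fin (t + 2) → V)
      ↔ g 0 ∉ S ∧ AvoidEvent (insert (g 0) S) t g := by
  unfold AvoidEvent
  rw [Fin.cons_injective_iff]
  simp only [Fin.cons_succ, Finset.mem_insert, not_or]
  constructor
  · rintro ⟨⟨-, h2⟩, h3⟩
    exact ⟨h3 0, h2, fun i => ⟨fun h => Fin.succ_ne_zero i (h2 h), h3 _⟩⟩
  · rintro ⟨h1, h2, h3⟩
    have h4 : ∀ i, g i ∉ S := fun i => by
      refine Fin.cases h1 (fun j => (h3 j).2) i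
    exact ⟨⟨fun ⟨i, hi⟩ => h4 i (hi ▸ hv), h2⟩, h4⟩

lemma isWalkFun_cons (v : V) (t : ℕ) (g : Fin (t + 1) → V) :
    IsWalkFun G (t + 1) (Fin.cons v g : Fin (t + 2) → V)
      ↔ G.Adj v (g 0) ∧ IsWalkFun G t g := by
  unfold IsWalkFun
  rw [Fin.forall_fin_succ]
  simp

lemma walkProb_cons (v : V) (t : ℕ) (g : Fin (t + 1) → V) :
    walkProb G (t + 1) (Fin.cons v g : Fin (t + 2) → V)
      = 1 / (G.degree v : ℝ) * walkProb G t g := by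
  unfold walkProb
  rw [Fin.prod_univ_succ]
  rfl

/-- The Markov property at time `1`. -/
lemma walkEventProb_avoid_succ {S : Finset V} {v : V} (hv : v ∈ S) (t : ℕ) :
    walkEventProb G v (t + 1) (AvoidEvent S (t + 1))
      = ∑ w, if w ∈ S then 0
          else transMat G v w * walkEventProb G w t (AvoidEvent (insert w S) t) := by
  have hL : walkEventProb G v (t + 1) (AvoidEvent S (t + 1))
      = ∑ g : Fin (t + 1) → V,
          if G.Adj v (g 0) ∧ g 0 ∉ S ∧ IsWalkFun G t g ∧ AvoidEvent (insert (g 0) S) t g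
          then 1 / (G.degree v : ℝ) * walkProb G t g else 0 := by
    unfold walkEventProb
    rw [← Fintype.sum_equiv (Fin.consEquiv fun _ : Fin (t + 2) => V)
      (fun p => if p.1 = v ∧ IsWalkFun G (t + 1) (Fin.cons p.1 p.2 : Fin (t + 2) → V) ∧
          AvoidEvent S (t + 1) (Fin.cons p.1 p.2 : Fin (t + 2) → V)
        then walkProb G (t + 1) (Fin.cons p.1 p.2 : Fin (t + 2) → V) else 0) _
      (fun p => by simp [Fin.consEquiv])]
    rw [Fintype.sum_prod_type, Finset.sum_eq_single v]
    · refine Finset.sum_congr rfl fun g _ => ?_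
      dsimp only
      rw [walkProb_cons]
      refine if_congr ?_ rfl rfl
      rw [avoidEvent_cons hv, isWalkFun_cons]
      tauto
    · intro b _ hb
      exact Finset.sum_eq_zero fun g _ => if_neg fun h => hb h.1
    · simp
  rw [hL]
  unfold walkEventProb
  have hR : ∀ w, (if w ∈ S then (0 : ℝ) else transMat G v w * ∑ f : Fin (t + 1) → V,
      if f 0 = w ∧ IsWalkFun G t f ∧ AvoidEvent (insert w S) t f then walkProb G t f else 0)
      = ∑ f : Fin (t + 1) → V, if w = f 0 then
          (if G.Adj v (f 0) ∧ f 0 ∉ S ∧ IsWalkFun G t f ∧ AvoidEvent (insert (f 0) S) t f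
            then 1 / (G.degree v : ℝ) * walkProb G t f else 0) else 0 := by
    intro w
    split_ifs with hw
    · symm
      refine Finset.sum_eq_zero fun f _ => ?_
      split_ifs with h1 h2
      · exact absurd (h1 ▸ hw) h2.2.1
      · rfl
      · rfl
    · rw [Finset.mul_sum]
      refine Finset.sum_congr rfl fun f _ => ?_
      by_cases h1 : w = f 0
      · subst h1
        by_cases h2 : G.Adj v (f 0) <;> simp [transMat, h2, hw]
      · simp [h1, Ne.symm h1]
  simp_rw [hR]
  rw [Finset.sum_comm]
  simp

/-! ### The survival estimate -/

/-- Lower bound for the probability that the walk from `u` makes `t` more steps without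
revisiting its history `S`. -/
lemma survival_lower_bound {k : ℕ} (hk : 0 < k) (hd : 0 < G.minDegree) {B s : ℝ} {N : ℕ}
    (hB0 : 0 ≤ B) (hB : ∀ v u, (transMat G ^ (k + 1)) v u ≤ B)
    (hs : 2 * (N * B) + 2 * k / G.minDegree ≤ s) (hs1 : s ≤ 1 / (2 * k)) (t : ℕ) :
    ∀ (S : Finset V) (u : V), u ∈ S → S.card + t ≤ N + 1 →
      (1 - s) ^ t * (1 - visitPotential G k S u)
        ≤ walkEventProb G u t (AvoidEvent S t) := by
  have hk1 : (1 : ℝ) ≤ k := by exact_mod_cast hk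
  have hs2 : s ≤ 1 := hs1.trans (by rw [div_le_one (by positivity)]; linarith)
  induction t with
  | zero =>
    intro S u _ _
    rw [walkEventProb_zero G u (AvoidEvent S 0)
      fun f => ⟨Function.injective_of_subsingleton f, fun i => i.elim0⟩]
    linarith [visitPotential_nonneg G k S u]
  | succ t ih =>
    intro S u hu hS
    rw [walkEventProb_avoid_succ G hu]
    have hρ : 0 ≤ (1 - s) ^ t := pow_nonneg (by linarith) t
    have hterm : ∀ w, (1 - s) ^ t * (transMat G u w * (1 - (if w ∈ S then 1 else 0)
        - visitPotential G k S w - 2 * k / G.minDegree))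
        ≤ if w ∈ S then 0
          else transMat G u w * walkEventProb G w t (AvoidEvent (insert w S) t) := by
      intro w
      have hM := transMat_nonneg G u w
      have hΦ := visitPotential_nonneg G k S w
      have hq : 0 ≤ 2 * (k : ℝ) / G.minDegree := by positivity
      split_ifs with hw
      · exact mul_nonpos_of_nonneg_of_nonpos hρ
          (mul_nonpos_of_nonneg_of_nonpos hM (by linarith))
      · have h1 := ih (insert w S) w (Finset.mem_insert_self w S)
          (by rw [Finset.card_insert_of_notMem hw]; omega)
        have h2 := visitPotential_insert_le G hd k hw
        calc _ = transMat G u w * ((1 - s) ^ t *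
              (1 - 0 - visitPotential G k S w - 2 * k / G.minDegree)) := by ring
          _ ≤ transMat G u w * ((1 - s) ^ t * (1 - visitPotential G k (insert w S) w)) := by
            refine mul_le_mul_of_nonneg_left (mul_le_mul_of_nonneg_left ?_ hρ) hM
            linarith
          _ ≤ _ := by gcongr
    refine le_trans ?_ (Finset.sum_le_sum fun w _ => hterm w)
    rw [← Finset.mul_sum, pow_succ, mul_assoc]
    refine mul_le_mul_of_nonneg_left ?_ hρ
    have hsum : ∑ w, transMat G u w * (1 - (if w ∈ S then 1 else 0)
        - visitPotential G k S w - 2 * k / G.minDegree)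
        = 1 - ∑ x ∈ S, (transMat G ^ 1) u x - ∑ w, transMat G u w * visitPotential G k S w
          - 2 * k / G.minDegree := by
      simp_rw [mul_sub, Finset.sum_sub_distrib, ← Finset.sum_mul, transMat_row_sum G hd]
      simp
    have hshift := weighted_shift_le hk (fun i => ∑ x ∈ S, (transMat G ^ i) u x)
      (fun i => Finset.sum_nonneg fun x _ => transMat_pow_nonneg G i u x)
    have hlast : ∑ x ∈ S, (transMat G ^ (k + 1)) u x ≤ N * B := by
      calc _ ≤ ∑ x ∈ S, B := Finset.sum_le_sum fun x _ => hB u x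
        _ = S.card * B := by rw [Finset.sum_const, nsmul_eq_mul]
        _ ≤ N * B := by
          gcongr
          omega
    have hsΦ : s * visitPotential G k S u ≤ 1 / (2 * k) * visitPotential G k S u :=
      mul_le_mul_of_nonneg_right hs1 (visitPotential_nonneg G k S u)
    rw [hsum, sum_transMat_mul_visitPotential]
    change _ ≤ (1 - 1 / (2 * (k : ℝ))) * visitPotential G k S u + _ at hshift
    linarith

end Aux

/-- Let `β = 10^{−28}` and let `G` be a connected `100`-almost-regular
bipartite graph on `n` vertices with mixing time `k` and minimum degree at least
`10³·k²/β`. Then for every vertex `v`, the probability that the random walk started at `v`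
of length `β²·n/(10^6·k)` is self-avoiding is at least `exp(−β³·n/(10^5·k²))`. -/
theorem stmt_14 {V : Type} [Fintype V] (G : SimpleGraph V) (P : Finset V) (k : ℕ) (β : ℝ)
    (hβ : β = 1 / 10 ^ 28)
    (hconn : G.Connected) (hbip : IsBipartition G P) (hreg : AlmostRegular 100 G)
    (hmix : HasMixingTime G P k)
    (hdelta : 10 ^ 3 * (k : ℝ) ^ 2 / β ≤ (G.minDegree : ℝ)) :
    ∀ v : V,
      Real.exp (-(β ^ 3 * (Fintype.card V : ℝ) / (10 ^ 5 * (k : ℝ) ^ 2))) ≤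
        walkEventProb G v ⌊β ^ 2 * (Fintype.card V : ℝ) / (10 ^ 6 * (k : ℝ))⌋₊
          (fun f => Function.Injective f) := by
  intro v
  by_cases hk : k = 0
  · -- With `k = 0` both quotients by `k` are `0`, so the walk has length `0`.
    subst hk
    have h0 : ⌊β ^ 2 * (Fintype.card V : ℝ) / (10 ^ 6 * ((0 : ℕ) : ℝ))⌋₊ = 0 := by simp
    rw [h0, walkEventProb_zero G v _ fun f => Function.injective_of_subsingleton f]
    simp
  have hkpos : 0 < k := Nat.pos_of_ne_zero hk
  have hk1 : (1 : ℝ) ≤ k := by exact_mod_cast hkpos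
  have hβ0 : 0 < β := by rw [hβ]; positivity
  have hβ1 : β ≤ 1 / 10 ^ 6 := by rw [hβ]; norm_num
  have hV : Nonempty V := ⟨v⟩
  have hn : (1 : ℝ) ≤ Fintype.card V := by exact_mod_cast Fintype.card_pos
  have hδ0 : (0 : ℝ) < G.minDegree := lt_of_lt_of_le (by positivity) hdelta
  have hd : 0 < G.minDegree := by exact_mod_cast hδ0
  set n : ℝ := (Fintype.card V : ℝ) with hn_def
  set L : ℝ := β ^ 2 * n / (10 ^ 6 * (k : ℝ)) with hL
  have hL0 : 0 ≤ L := by positivity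
  by_cases hT : ⌊L⌋₊ = 0
  · rw [hT, walkEventProb_zero G v _ fun f => Function.injective_of_subsingleton f,
      Real.exp_le_one_iff, neg_nonpos]
    positivity
  have hT1 : (1 : ℝ) ≤ ⌊L⌋₊ := by exact_mod_cast Nat.pos_of_ne_zero hT
  have hTL : (⌊L⌋₊ : ℝ) ≤ L := Nat.floor_le hL0
  set T : ℕ := ⌊L⌋₊
  set s : ℝ := β / (100 * k) with hs
  have hs0 : 0 < s := by positivity
  have hkδ : 2 * (k : ℝ) / G.minDegree ≤ s / 5 := by
    rw [div_le_iff₀ hβ0] at hdelta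
    rw [hs, div_div, div_le_div_iff₀ hδ0 (by positivity)]
    nlinarith
  have hTB : 2 * ((T : ℝ) * (201 / n)) ≤ s / 5 := by
    calc 2 * ((T : ℝ) * (201 / n)) ≤ 2 * (L * (201 / n)) := by gcongr
      _ = 402 / 10 ^ 6 * β * (β / k) := by rw [hL]; field_simp; ring
      _ ≤ 1 / 500 * (β / k) := by gcongr; nlinarith
      _ = s / 5 := by rw [hs]; field_simp; norm_num
  have hs1 : s ≤ 1 / (2 * k) := by
    rw [hs, div_le_div_iff₀ (by positivity) (by positivity)]
    nlinarith
  have hs2 : s ≤ 1 / 2 := hs1.trans (by gcongr; linarith)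
  have hmain := survival_lower_bound G hkpos hd (B := 201 / n) (s := s) (N := T) (by positivity)
    (transMat_pow_mix_le G hd hreg hmix) (by linarith) hs1 T {v} v
    (Finset.mem_singleton_self v) (by rw [Finset.card_singleton]; omega)
  have hE : walkEventProb G v T (AvoidEvent {v} T)
      ≤ walkEventProb G v T (fun f => Function.Injective f) := by
    unfold walkEventProb
    refine Finset.sum_le_sum fun f _ => ?_
    have hp : 0 ≤ walkProb G T f := Finset.prod_nonneg fun i _ => by positivity
    split_ifs with h1 h2
    · exact le_rfl
    · exact absurd ⟨h1.1, h1.2.1, h1.2.2.1⟩ h2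
    · exact hp
    · exact le_rfl
  refine le_trans ?_ (hmain.trans hE)
  have hexp : Real.exp (-(2 * s)) ≤ 1 - s := by
    have h1 : 1 + 2 * s ≤ Real.exp (2 * s) := by linarith [Real.add_one_le_exp (2 * s)]
    rw [Real.exp_neg, inv_le_comm₀ (Real.exp_pos _) (by linarith)]
    refine le_trans ?_ h1
    rw [inv_le_iff_one_le_mul₀ (by linarith)]
    nlinarith
  have hinit := visitPotential_singleton_le G hd k v
  calc Real.exp (-(β ^ 3 * n / (10 ^ 5 * (k : ℝ) ^ 2)))
      ≤ Real.exp (((T + 1 : ℕ) : ℝ) * (-(2 * s))) := by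
        have hval : β ^ 3 * n / (10 ^ 5 * (k : ℝ) ^ 2) = L * (1000 * s) := by
          rw [hL, hs]; field_simp; norm_num
        rw [hval]
        push_cast
        gcongr
        nlinarith
    _ = Real.exp (-(2 * s)) ^ (T + 1) := Real.exp_nat_mul _ _
    _ ≤ (1 - s) ^ (T + 1) := by gcongr
    _ = (1 - s) ^ T * (1 - s) := pow_succ _ _
    _ ≤ _ := by
        have : 0 ≤ (1 - s) ^ T := pow_nonneg (by linarith) _
        gcongr
        linarith
end

section
/- Let β > 0, let G be a 100-almost-regular graph with no isolated vertices, and let k ≥ 1 be an integer. For A ⊆ V(G) and a vertex v, let E_A^v denote the event that the nearest-neighbour random walk (X_t^v) started at v satisfies X_t^v ∉ A for all t ∈ {1, ..., k}. Then for every set A ⊆ V(G), the set B of vertices v such that P(not E_A^v) ≥ β has size |B| ≤ 100·k·|A|/β. -/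
/-! The proof is Markov's inequality combined with reversibility of the walk. Started from the
degree measure `v ↦ d(v)`, the walk is stationary: for every `j ≤ t`, the `d`-weighted total mass
of the trajectories of length `t` that sit at `a` at time `j` is exactly `d(a)`
(`sum_walkWeight_mul`). A union bound over the `k` times therefore gives
`∑ v, d(v) · P_v(A is hit) ≤ k · ∑ a ∈ A, d(a)` (`sum_degree_mul_hit_le`). Bounding the degrees
below by `δ(G)` on the left and above by `Δ(G) ≤ 100 δ(G)` on the right, and cancelling
`δ(G) > 0`, yields `∑ v, P_v(A is hit) ≤ 100 k |A|`, and Markov's inequality finishes. -/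

open Finset
open scoped Classical

/-- The mass of the trajectory `f` under the (unnormalised) walk whose starting vertex is
distributed according to the degree measure; it is `0` if `f` is not a walk in `G`. -/
noncomputable def walkWeight {V : Type} [Fintype V] (G : SimpleGraph V) (t : ℕ)
    (f : Fin (t + 1) → V) : ℝ :=
  if IsWalkFun G t f then (G.degree (f 0) : ℝ) * walkProb G t f else 0

theorem walkProb_nonneg {V : Type} [Fintype V] (G : SimpleGraph V) (t : ℕ)
    (f : Fin (t + 1) → V) : 0 ≤ walkProb G t f :=
  Finset.prod_nonneg fun _ _ => by positivity

theorem walkWeight_nonneg {V : Type} [Fintype V] (G : SimpleGraph V) (t : ℕ)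
    (f : Fin (t + 1) → V) : 0 ≤ walkWeight G t f := by
  unfold walkWeight
  split_ifs
  · exact mul_nonneg (Nat.cast_nonneg _) (walkProb_nonneg G t f)
  · exact le_rfl

theorem sum_ite_adj {V : Type} [Fintype V] (G : SimpleGraph V) (u : V) (c : ℝ) :
    (∑ x : V, if G.Adj u x then c else 0) = (G.degree u : ℝ) * c := by
  rw [← Finset.sum_filter, Finset.sum_const, nsmul_eq_mul, ← G.neighborFinset_eq_filter,
    G.card_neighborFinset_eq_degree]

theorem walkWeight_snoc {V : Type} [Fintype V] (G : SimpleGraph V) (t : ℕ)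
    (f : Fin (t + 1) → V) (x : V) :
    walkWeight G (t + 1) (Fin.snoc (α := fun _ => V) f x) =
      if G.Adj (f (Fin.last t)) x then
        walkWeight G t f * (1 / (G.degree (f (Fin.last t)) : ℝ)) else 0 := by
  have hc : ∀ i : Fin (t + 1),
      (Fin.snoc (α := fun _ => V) f x : Fin (t + 1 + 1) → V) i.castSucc = f i :=
    fun i => Fin.snoc_castSucc (α := fun _ => V) (p := f) (x := x) (i := i)
  have hl : (Fin.snoc (α := fun _ => V) f x : Fin (t + 1 + 1) → V) (Fin.last (t + 1)) = x :=
    Fin.snoc_last (α := fun _ => V) (p := f) (x := x)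
  generalize (Fin.snoc (α := fun _ => V) f x : Fin (t + 1 + 1) → V) = g at hc hl ⊢
  have h0 : g 0 = f 0 := hc 0
  have hw : IsWalkFun G (t + 1) g ↔ IsWalkFun G t f ∧ G.Adj (f (Fin.last t)) x := by
    unfold IsWalkFun
    rw [Fin.forall_fin_succ']
    simp only [hc, Fin.succ_castSucc, Fin.succ_last, hl]
  have hp : walkProb G (t + 1) g =
      walkProb G t f * (1 / (G.degree (f (Fin.last t)) : ℝ)) := by
    unfold walkProb
    rw [Fin.prod_univ_castSucc, hc]
    congr 1
    exact Finset.prod_congr rfl fun i _ => by rw [hc]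
  unfold walkWeight
  rw [h0, hp]
  by_cases h1 : IsWalkFun G t f <;> by_cases h2 : G.Adj (f (Fin.last t)) x <;>
    simp [hw, h1, h2, mul_assoc]

theorem walkWeight_cons {V : Type} [Fintype V] (G : SimpleGraph V)
    (hiso : ∀ v : V, 0 < G.degree v) (t : ℕ) (f : Fin (t + 1) → V) (x : V) :
    walkWeight G (t + 1) (Fin.cons (α := fun _ => V) x f) =
      if G.Adj (f 0) x then (if IsWalkFun G t f then walkProb G t f else 0) else 0 := by
  have h0 : (Fin.cons (α := fun _ => V) x f : Fin (t + 1 + 1) → V) 0 = x := rfl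
  have hs : ∀ i : Fin (t + 1),
      (Fin.cons (α := fun _ => V) x f : Fin (t + 1 + 1) → V) i.succ = f i := fun _ => rfl
  generalize (Fin.cons (α := fun _ => V) x f : Fin (t + 1 + 1) → V) = g at h0 hs ⊢
  have hw : IsWalkFun G (t + 1) g ↔ G.Adj x (f 0) ∧ IsWalkFun G t f := by
    unfold IsWalkFun
    rw [Fin.forall_fin_succ]
    simp only [Fin.castSucc_zero, h0, hs, ← Fin.succ_castSucc]
  have hp : walkProb G (t + 1) g = (1 / (G.degree x : ℝ)) * walkProb G t f := by
    unfold walkProb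
    rw [Fin.prod_univ_succ, Fin.castSucc_zero, h0]
    congr 1
    exact Finset.prod_congr rfl fun i _ => by rw [← Fin.succ_castSucc, hs]
  have hd : (G.degree x : ℝ) ≠ 0 := by exact_mod_cast (hiso x).ne'
  unfold walkWeight
  rw [h0, hp, ← mul_assoc, mul_one_div_cancel hd, one_mul]
  by_cases h1 : IsWalkFun G t f <;> by_cases h2 : G.Adj (f 0) x <;>
    simp [hw, h1, h2, G.adj_comm x]

/-- Forgetting the last step: the transition probabilities out of a vertex sum to `1`. -/
theorem sum_walkWeight_snoc {V : Type} [Fintype V] (G : SimpleGraph V)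
    (hiso : ∀ v : V, 0 < G.degree v) (t : ℕ) (f : Fin (t + 1) → V) :
    ∑ x : V, walkWeight G (t + 1) (Fin.snoc (α := fun _ => V) f x) = walkWeight G t f := by
  have hd : (G.degree (f (Fin.last t)) : ℝ) ≠ 0 := by exact_mod_cast (hiso _).ne'
  simp only [walkWeight_snoc]
  rw [sum_ite_adj]
  field_simp

/-- Forgetting the first step: this is the stationarity of the degree measure. -/
theorem sum_walkWeight_cons {V : Type} [Fintype V] (G : SimpleGraph V)
    (hiso : ∀ v : V, 0 < G.degree v) (t : ℕ) (f : Fin (t + 1) → V) :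
    ∑ x : V, walkWeight G (t + 1) (Fin.cons (α := fun _ => V) x f) = walkWeight G t f := by
  simp only [walkWeight_cons G hiso]
  rw [sum_ite_adj, walkWeight, mul_ite, mul_zero]

/-- Under the walk started from the degree measure, the position at every time `j` is again
distributed according to the degree measure. -/
theorem sum_walkWeight_mul {V : Type} [Fintype V] (G : SimpleGraph V)
    (hiso : ∀ v : V, 0 < G.degree v) (φ : V → ℝ) (t : ℕ) (j : Fin (t + 1)) :
    ∑ f : Fin (t + 1) → V, walkWeight G t f * φ (f j) = ∑ a : V, (G.degree a : ℝ) * φ a := by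
  induction t with
  | zero =>
    rw [← (Equiv.funUnique (Fin 1) V).symm.sum_comp]
    refine Finset.sum_congr rfl fun a _ => ?_
    have hj : ∀ i : Fin (0 + 1), (Equiv.funUnique (Fin 1) V).symm a i = a := fun _ => rfl
    rw [walkWeight, hj, hj]
    simp [walkProb, IsWalkFun]
  | succ t ih =>
    refine Fin.cases ?_ (fun i => ?_) j
    · -- At time `0` the last step is irrelevant, so it can be summed out.
      rw [← ih 0, ← (Fin.snocEquiv (fun _ : Fin (t + 1 + 1) => V)).sum_comp,
        Fintype.sum_prod_type_right]
      refine Finset.sum_congr rfl fun f _ => ?_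
      rw [← sum_walkWeight_snoc G hiso t f, Finset.sum_mul]
      refine Finset.sum_congr rfl fun x _ => ?_
      have h0 : (Fin.snoc (α := fun _ => V) f x : Fin (t + 1 + 1) → V) 0 = f 0 :=
        Fin.snoc_castSucc (α := fun _ => V) (p := f) (x := x) (i := 0)
      change walkWeight G (t + 1) (Fin.snoc (α := fun _ => V) f x) *
        φ ((Fin.snoc (α := fun _ => V) f x : Fin (t + 1 + 1) → V) 0) = _
      rw [h0]
    · -- At a positive time the first step can be summed out, by stationarity.
      rw [← ih i, ← (Fin.consEquiv (fun _ : Fin (t + 1 + 1) => V)).sum_comp,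
        Fintype.sum_prod_type_right]
      refine Finset.sum_congr rfl fun f _ => ?_
      rw [← sum_walkWeight_cons G hiso t f, Finset.sum_mul]
      rfl

theorem walkEventProb_nonneg {V : Type} [Fintype V] (G : SimpleGraph V) (v : V) (t : ℕ)
    (E : (Fin (t + 1) → V) → Prop) : 0 ≤ walkEventProb G v t E := by
  refine Finset.sum_nonneg fun f _ => ?_
  split_ifs
  · exact walkProb_nonneg G t f
  · exact le_rfl

theorem sum_degree_mul_walkEventProb {V : Type} [Fintype V] (G : SimpleGraph V) (t : ℕ)
    (E : (Fin (t + 1) → V) → Prop) :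
    ∑ v : V, (G.degree v : ℝ) * walkEventProb G v t E =
      ∑ f : Fin (t + 1) → V, if E f then walkWeight G t f else 0 := by
  simp only [walkEventProb, Finset.mul_sum]
  rw [Finset.sum_comm]
  refine Finset.sum_congr rfl fun f _ => ?_
  rw [Finset.sum_eq_single (f 0)]
  · by_cases h1 : IsWalkFun G t f <;> by_cases h2 : E f <;> simp [walkWeight, h1, h2]
  · intro v _ hv
    simp [hv.symm]
  · simp

/-- The union bound over the times `1, …, k`, for the walk started from the degree measure. -/
theorem sum_degree_mul_hit_le {V : Type} [Fintype V] (G : SimpleGraph V)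
    (hiso : ∀ v : V, 0 < G.degree v) (k : ℕ) (A : Finset V) :
    ∑ v : V, (G.degree v : ℝ) * walkEventProb G v k (fun f => ∃ i : Fin k, f i.succ ∈ A) ≤
      (k : ℝ) * ∑ a ∈ A, (G.degree a : ℝ) := by
  have hstat : ∀ i : Fin k, ∑ f : Fin (k + 1) → V,
      walkWeight G k f * (if f i.succ ∈ A then 1 else 0) = ∑ a ∈ A, (G.degree a : ℝ) := by
    intro i
    rw [sum_walkWeight_mul G hiso (fun a => if a ∈ A then 1 else 0) k i.succ]
    simp
  calc
    _ = ∑ f : Fin (k + 1) → V, if ∃ i : Fin k, f i.succ ∈ A then walkWeight G k f else 0 := by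
      refine (sum_degree_mul_walkEventProb G k _).trans ?_
      exact Finset.sum_congr rfl fun f _ => by congr
    _ ≤ ∑ f : Fin (k + 1) → V, ∑ i : Fin k,
        walkWeight G k f * (if f i.succ ∈ A then 1 else 0) := by
      refine Finset.sum_le_sum fun f _ => ?_
      have hnn : ∀ i ∈ (Finset.univ : Finset (Fin k)),
          0 ≤ walkWeight G k f * (if f i.succ ∈ A then (1 : ℝ) else 0) := fun i _ =>
        mul_nonneg (walkWeight_nonneg G k f) (by split_ifs <;> norm_num)
      split_ifs with h
      · obtain ⟨i, hi⟩ := h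
        refine le_trans ?_ (Finset.single_le_sum hnn (Finset.mem_univ i))
        simp [hi]
      · exact Finset.sum_nonneg hnn
    _ = (k : ℝ) * ∑ a ∈ A, (G.degree a : ℝ) := by
      rw [Finset.sum_comm, Finset.sum_congr rfl fun i _ => hstat i]
      simp

/-- Let `β > 0`, let `G` be a `100`-almost-regular graph with no isolated
vertices, and let `k ≥ 1`. For every vertex set `A`, the set `B` of vertices `v` for which
the random walk started at `v` hits `A` within the first `k` steps with probability at least
`β` satisfies `|B| ≤ 100·k·|A|/β`. -/
theorem stmt_15 {V : Type} [Fintype V] (G : SimpleGraph V) (β : ℝ) (hβ : 0 < β)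
    (hreg : AlmostRegular 100 G) (hiso : ∀ v : V, 0 < G.degree v)
    (k : ℕ) (hk : 1 ≤ k) (A : Finset V) :
    (((Finset.univ.filter (fun v : V =>
          β ≤ walkEventProb G v k (fun f => ∃ i : Fin k, f i.succ ∈ A))).card : ℝ))
      ≤ 100 * (k : ℝ) * (A.card : ℝ) / β := by
  rcases isEmpty_or_nonempty V with hV | hV
  · have hA : A = ∅ := Finset.eq_empty_of_isEmpty A
    simp [hA]
  set h : V → ℝ := fun v => walkEventProb G v k (fun f => ∃ i : Fin k, f i.succ ∈ A) with hh
  have hδ : (0 : ℝ) < (G.minDegree : ℝ) := by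
    obtain ⟨v, hv⟩ := G.exists_minimal_degree_vertex
    rw [hv]
    exact_mod_cast hiso v
  have hsum : ∑ v : V, h v ≤ 100 * (k : ℝ) * (A.card : ℝ) := by
    refine le_of_mul_le_mul_left ?_ hδ
    calc
      (G.minDegree : ℝ) * ∑ v : V, h v ≤ ∑ v : V, (G.degree v : ℝ) * h v := by
        rw [Finset.mul_sum]
        refine Finset.sum_le_sum fun v _ => ?_
        exact mul_le_mul_of_nonneg_right (by exact_mod_cast G.minDegree_le_degree v)
          (walkEventProb_nonneg G v k _)
      _ ≤ (k : ℝ) * ∑ a ∈ A, (G.degree a : ℝ) := sum_degree_mul_hit_le G hiso k A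
      _ ≤ (k : ℝ) * ∑ a ∈ A, 100 * (G.minDegree : ℝ) := by
        gcongr with a ha
        exact le_trans (by exact_mod_cast G.degree_le_maxDegree a) hreg
      _ = (G.minDegree : ℝ) * (100 * (k : ℝ) * (A.card : ℝ)) := by
        rw [Finset.sum_const, nsmul_eq_mul]
        ring
  -- Markov's inequality for the counting measure on `V`.
  rw [le_div_iff₀ hβ]
  calc
    _ = ∑ v ∈ Finset.univ.filter (fun v : V => β ≤ h v), β := by
      rw [Finset.sum_const, nsmul_eq_mul]
    _ ≤ ∑ v ∈ Finset.univ.filter (fun v : V => β ≤ h v), h v :=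
      Finset.sum_le_sum fun v hv => (Finset.mem_filter.mp hv).2
    _ ≤ ∑ v : V, h v :=
      Finset.sum_le_sum_of_subset_of_nonneg (Finset.filter_subset _ _)
        fun v _ _ => walkEventProb_nonneg G v k _
    _ ≤ 100 * (k : ℝ) * (A.card : ℝ) := hsum
end
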